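/- arXiv:2101.09602 — 2 statements merged into one kernel-verified Lean document; each statement's English description precedes it below -/
import Mathlib

section
/- Let q be a prime and let M2, N2 be integers coprime to q. Then ∑ e((M2·v14·v34* + N2·v14)/q) = q², where the sum runs over all triples (v13, v14, v23) ∈ (ℤ/qℤ)³ such that (v13, v14) ≠ (0,0) and v34 := −(v13² + v14·v23) ≠ 0 in ℤ/qℤ, and v34* denotes the multiplicative inverse of v34 modulo q. (This evaluates the Sp(4) Kloosterman sum Kl_{q, s_β s_α s_β}((q,q²), M, N) to be q².) -/
/-!
Let `ψ` be the additive character `e(·/q)` and fix `v13`. For `v14 ≠ 0`, as `v23` varies, `v34` runs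
once over the whole field, so the sum over `v34 ≠ 0` of `ψ (M v14 v34⁻¹)` is a complete character
sum without its term at zero, namely `-1`. Summing the remaining `-ψ (N v14)` over `v14 ≠ 0` gives
`1` in the same way. The terms with `v14 = 0` are all equal to `1`, and there are `q` of them for
each `v13 ≠ 0`. Altogether the sum is `q + (q - 1) q = q²`.
-/

open Finset

theorem sum_ne_zero_addChar_mul {A R : Type*} [CommRing A] [Fintype A] [DecidableEq A]
    [CommRing R] [IsDomain R] {ψ : AddChar A R} (hψ : ψ.IsPrimitive) {b : A} (hb : b ≠ 0) :
    ∑ u with u ≠ 0, ψ (b * u) = -1 := by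
  have complete_sum : ∑ u, ψ (b * u) = 0 := by
    simpa [hb, mul_comm] using AddChar.sum_mulShift b hψ
  rw [filter_ne', sum_erase_eq_sub (mem_univ 0), complete_sum, mul_zero, AddChar.map_zero_eq_one,
    zero_sub]

section FiniteField

variable {F : Type*} [Field F] [Fintype F] [DecidableEq F]

theorem sum_inv_affine_eq_sum_ne_zero {B : Type*} [AddCommMonoid B] {a : F} (ha : a ≠ 0) (c : F)
    (f : F → B) :
    ∑ z with a * z + c ≠ 0, f (a * z + c)⁻¹ = ∑ u with u ≠ 0, f u := by
  have inv_affine_injective : Function.Injective fun z ↦ (a * z + c)⁻¹ := fun _ _ h ↦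
    mul_left_cancel₀ ha (add_right_cancel (inv_injective h))
  have reindex := (Finite.injective_iff_bijective.mp inv_affine_injective).sum_comp
    fun u ↦ if u ≠ 0 then f u else 0
  simpa only [sum_filter, ne_eq, inv_eq_zero] using reindex

variable {R : Type*} [CommRing R] [IsDomain R] {ψ : AddChar F R}

theorem sum_addChar_inv_neg_add_mul (hψ : ψ.IsPrimitive) {M a : F} (hM : M ≠ 0) (ha : a ≠ 0)
    (N c : F) :
    ∑ z with -(c + a * z) ≠ 0, ψ (M * a * (-(c + a * z))⁻¹ + N * a) = -ψ (N * a) := by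
  have neg_eq_affine (z : F) : -(c + a * z) = -a * z + -c := by ring
  simp only [neg_eq_affine]
  rw [sum_inv_affine_eq_sum_ne_zero (neg_ne_zero.mpr ha) (-c) fun u ↦ ψ (M * a * u + N * a)]
  simp only [AddChar.map_add_eq_mul]
  rw [← sum_mul, sum_ne_zero_addChar_mul hψ (mul_ne_zero hM ha), neg_one_mul]

theorem sum_sum_addChar_inv_neg_add_mul (hψ : ψ.IsPrimitive) {M N : F} (hM : M ≠ 0) (hN : N ≠ 0)
    (c : F) :
    ∑ a, ∑ z with -(c + a * z) ≠ 0, ψ (M * a * (-(c + a * z))⁻¹ + N * a)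
      = (if c = 0 then 0 else (Fintype.card F : R)) + 1 := by
  rw [← add_sum_erase univ _ (mem_univ 0), ← filter_ne']
  congr 1
  · by_cases hc : c = 0 <;> simp [hc]
  · calc
      _ = ∑ a with a ≠ 0, -ψ (N * a) := sum_congr rfl fun a ha ↦
        sum_addChar_inv_neg_add_mul hψ hM (mem_filter.mp ha).2 N c
      _ = 1 := by rw [sum_neg_distrib, sum_ne_zero_addChar_mul hψ hN, neg_neg]

theorem sp4_kloosterman_sbeta_salpha_sbeta_eval_general (hψ : ψ.IsPrimitive) {M N : F}
    (hM : M ≠ 0) (hN : N ≠ 0) :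
    ∑ v : F × F × F with (v.1 ≠ 0 ∨ v.2.1 ≠ 0) ∧ -(v.1 ^ 2 + v.2.1 * v.2.2) ≠ 0,
      ψ (M * v.2.1 * (-(v.1 ^ 2 + v.2.1 * v.2.2))⁻¹ + N * v.2.1) = (Fintype.card F : R) ^ 2 := by
  have support_iff (v : F × F × F) :
      (v.1 ≠ 0 ∨ v.2.1 ≠ 0) ∧ -(v.1 ^ 2 + v.2.1 * v.2.2) ≠ 0 ↔
        -(v.1 ^ 2 + v.2.1 * v.2.2) ≠ 0 := by
    refine and_iff_right_of_imp fun hv ↦ ?_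
    contrapose! hv
    simp [hv]
  calc
    _ = ∑ x, ∑ a, ∑ z with -(x ^ 2 + a * z) ≠ 0,
          ψ (M * a * (-(x ^ 2 + a * z))⁻¹ + N * a) := by
      simp only [support_iff, sum_filter, Fintype.sum_prod_type]
    _ = ∑ x : F, ((if x = 0 then 0 else (Fintype.card F : R)) + 1) := by
      simp only [sum_sum_addChar_inv_neg_add_mul hψ hM hN, sq_eq_zero_iff]
    _ = ((Fintype.card F : R) - 1) * Fintype.card F + Fintype.card F := by
      simp [sum_add_distrib, sum_ite, filter_ne', card_erase_of_mem, Fintype.card_pos]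
    _ = (Fintype.card F : R) ^ 2 := by ring

end FiniteField

theorem exp_two_pi_I_mul_val_div_eq_stdAddChar {n : ℕ} [NeZero n] (t : ZMod n) :
    Complex.exp (2 * Real.pi * Complex.I * ((t.val : ℂ) / (n : ℂ))) = ZMod.stdAddChar t := by
  rw [ZMod.stdAddChar_apply, ZMod.toCircle_apply, mul_div_assoc]

theorem intCast_zmod_ne_zero_of_isCoprime {n : ℕ} [Nontrivial (ZMod n)] {m : ℤ}
    (h : IsCoprime m (n : ℤ)) : (m : ZMod n) ≠ 0 :=
  ((ZMod.coe_int_isUnit_iff_isCoprime m n).mpr h.symm).ne_zero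

/-- Evaluation of the `Sp(4)` Kloosterman sum `Kl_{q, s_β s_α s_β}((q,q²), M, N)`:
for a prime `q` and integers `M2, N2` coprime to `q`, the exponential sum over triples
`(v13, v14, v23) ∈ (ℤ/qℤ)³` with `(v13, v14) ≠ (0,0)` and `v34 := -(v13² + v14·v23) ≠ 0`
of `e((M2·v14·v34⁻¹ + N2·v14)/q)` equals `q²`. -/
theorem sp4_kloosterman_sbeta_salpha_sbeta_eval
    (q : ℕ) [Fact q.Prime] (M2 N2 : ℤ)
    (hM2 : IsCoprime M2 (q : ℤ)) (hN2 : IsCoprime N2 (q : ℤ)) :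
    ∑ v ∈ Finset.univ.filter (fun v : ZMod q × ZMod q × ZMod q =>
        (v.1 ≠ 0 ∨ v.2.1 ≠ 0) ∧ -(v.1 ^ 2 + v.2.1 * v.2.2) ≠ 0),
      Complex.exp (2 * Real.pi * Complex.I *
        ((((M2 : ZMod q) * v.2.1 * (-(v.1 ^ 2 + v.2.1 * v.2.2))⁻¹
            + (N2 : ZMod q) * v.2.1).val : ℂ) / (q : ℂ)))
      = (q : ℂ) ^ 2 := by
  simpa only [exp_two_pi_I_mul_val_div_eq_stdAddChar, ZMod.card] using
    sp4_kloosterman_sbeta_salpha_sbeta_eval_general (ZMod.isPrimitive_stdAddChar q)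
      (intCast_zmod_ne_zero_of_isCoprime hM2) (intCast_zmod_ne_zero_of_isCoprime hN2)
end

section
/- Let q be a prime and let M2, N2 be integers coprime to q. Then ∑ exp(2πi·(M2·v3·w + N2·v14)/q²) = 0, where the sum runs over all integer triples (v3, v4, v14) with 0 ≤ v3, v4 < q, 0 ≤ v14 < q², such that q does not divide both v3 and v4, and such that v34 := v3·v14 − v4²·q is coprime to q; here w denotes any integer with v34·w ≡ 1 (mod q²) (the summand is independent of this choice). (This evaluates the Sp(4) Kloosterman sum Kl_{q, w₀}((q,q³), M, N) to be 0, where w₀ is the long Weyl element.) -/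
/-!
The sum over `(v3, v4)` already vanishes for each fixed `v14`. Modulo `q ^ 2` the inverse of
`v34 = v3 * v14 - v4 ^ 2 * q` is given by a geometric series with two terms, so that
`v3 * w = v14⁻¹ + q * (v4 ^ 2 * v3⁻¹ * v14⁻¹ ^ 2)`. The first term does not depend on `(v3, v4)`,
and the second contributes a character modulo `q`. Summed over the units `v3` it is a Ramanujan
sum, equal to `q - 1` for `v4 = 0` and to `-1` for the other `q - 1` values of `v4`.
-/

open Finset ZMod

section FiniteField

variable {F R : Type*} [Field F] [Fintype F] [DecidableEq F] [CommRing R] [IsDomain R]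
  {ψ : AddChar F R}

lemma sum_ne_zero_addChar_mul_inv (hψ : ψ.IsPrimitive) (a : F) :
    ∑ x with x ≠ 0, ψ (a * x⁻¹) = (if a = 0 then (Fintype.card F : R) else 0) - 1 := by
  have sum_inv : ∑ x, ψ (a * x⁻¹) = ∑ x, ψ (x * a) := by
    simpa only [mul_comm a, Equiv.inv_apply] using Equiv.sum_comp (Equiv.inv F) fun x ↦ ψ (x * a)
  rw [filter_ne', sum_erase_eq_sub (mem_univ 0), sum_inv, AddChar.sum_mulShift a hψ]
  simp

lemma sum_sum_ne_zero_addChar_eq_zero (hψ : ψ.IsPrimitive) {c : F} (hc : c ≠ 0)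
    {n : ℕ} (hn : n ≠ 0) :
    ∑ y, ∑ x with x ≠ 0, ψ (c * y ^ n * x⁻¹) = 0 := by
  simp [sum_ne_zero_addChar_mul_inv hψ, hc, hn]

end FiniteField

lemma mul_eq_of_sub_mul_mul_eq_one {R : Type*} [CommRing R] {ε s t u w x z : R}
    (hε : ε ^ 2 = 0) (hx : x * t = 1) (hz : z * u = 1) (hw : (x * z - s * ε) * w = 1) :
    x * w = u + ε * (s * t * u ^ 2) := by
  have hinv : (x * z - s * ε) * (u + ε * (s * t * u ^ 2)) = x := by
    linear_combination (x + x * t * ε * s * u) * hz + ε * s * u * hx - s ^ 2 * t * u ^ 2 * hε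
  linear_combination (-w) * hinv + (u + ε * (s * t * u ^ 2)) * hw

lemma sum_range_natCast_zmod {A : Type*} [AddCommMonoid A] (n : ℕ) [NeZero n] (f : ZMod n → A) :
    ∑ i ∈ range n, f i = ∑ x, f x :=
  sum_bij' (fun i _ ↦ (i : ZMod n)) (fun x _ ↦ x.val) (by simp)
    (fun x _ ↦ mem_range.mpr x.val_lt) (fun _ hi ↦ val_cast_of_lt (mem_range.mp hi))
    (by simp) (by simp)

lemma isUnit_intCast_zmod_pow_iff {n k : ℕ} (hk : 0 < k) (a : ℤ) :
    IsUnit (a : ZMod (n ^ k)) ↔ IsUnit (a : ZMod n) := by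
  rw [coe_int_isUnit_iff_isCoprime, coe_int_isUnit_iff_isCoprime, Nat.cast_pow,
    IsCoprime.pow_left_iff hk]

lemma gcd_sub_mul_self_eq_one_iff {p : ℕ} [Fact p.Prime] (x z s : ℤ) :
    Int.gcd (x * z - s * p) p = 1 ↔ (x : ZMod p) ≠ 0 ∧ (z : ZMod p) ≠ 0 := by
  rw [← Int.isCoprime_iff_gcd_eq_one, isCoprime_comm, ← coe_int_isUnit_iff_isCoprime]
  simp

lemma stdAddChar_natCast_mul {m n N : ℕ} [NeZero n] [NeZero N] (h : m * n = N) (a : ZMod N) :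
    stdAddChar ((m : ZMod N) * a) = stdAddChar (castHom (Dvd.intro_left m h) (ZMod n) a) := by
  obtain ⟨a, rfl⟩ := intCast_surjective a
  have hm : (m : ℂ) ≠ 0 := by
    exact_mod_cast left_ne_zero_of_mul (h.trans_ne (NeZero.ne N))
  rw [map_intCast, stdAddChar_coe, ← Int.cast_natCast m, ← Int.cast_mul, stdAddChar_coe, ← h]
  push_cast
  rw [mul_left_comm, mul_div_mul_left _ _ hm]

lemma castHom_inv_of_isUnit {m n : ℕ} (h : m ∣ n) {a : ZMod n} (ha : IsUnit a) :
    castHom h (ZMod m) a⁻¹ = (castHom h (ZMod m) a)⁻¹ := by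
  refine (ZMod.inv_eq_of_mul_eq_one m _ _ ?_).symm
  rw [← map_mul, mul_inv_of_unit a ha, map_one]

lemma stdAddChar_mul_of_sub_mul_mul_modEq_one {n : ℕ} [NeZero n] {x z s w : ℤ} (M : ℤ)
    (hx : IsUnit (x : ZMod n)) (hz : IsUnit (z : ZMod n))
    (hw : (x * z - s * n) * w ≡ 1 [ZMOD (n : ℤ) ^ 2]) :
    stdAddChar ((M * x * w : ℤ) : ZMod (n ^ 2)) =
      stdAddChar ((M : ZMod (n ^ 2)) * (z : ZMod (n ^ 2))⁻¹) *
        stdAddChar ((M : ZMod n) * (z : ZMod n)⁻¹ ^ 2 * (s : ZMod n) * (x : ZMod n)⁻¹) := by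
  have hx' : IsUnit (x : ZMod (n ^ 2)) := (isUnit_intCast_zmod_pow_iff two_pos x).mpr hx
  have hz' : IsUnit (z : ZMod (n ^ 2)) := (isUnit_intCast_zmod_pow_iff two_pos z).mpr hz
  have hw' : ((x : ZMod (n ^ 2)) * z - s * n) * w = 1 := by
    exact_mod_cast (intCast_eq_intCast_iff _ 1 (n ^ 2)).mpr (by exact_mod_cast hw)
  have hn : (n : ZMod (n ^ 2)) ^ 2 = 0 := by exact_mod_cast natCast_self (n ^ 2)
  have hxw := mul_eq_of_sub_mul_mul_eq_one hn (mul_inv_of_unit _ hx') (mul_inv_of_unit _ hz') hw'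
  rw [Int.cast_mul, Int.cast_mul, mul_assoc, hxw, mul_add, AddChar.map_add_eq_mul, mul_left_comm,
    stdAddChar_natCast_mul (sq n).symm]
  congr 2
  simp only [map_mul, map_pow, map_intCast, castHom_inv_of_isUnit _ hx',
    castHom_inv_of_isUnit _ hz']
  ring

lemma exp_div_sq_eq_stdAddChar (n : ℕ) [NeZero n] (a : ℤ) :
    Complex.exp (2 * Real.pi * Complex.I * ((a : ℂ) / (n : ℂ) ^ 2)) =
      stdAddChar (a : ZMod (n ^ 2)) := by
  rw [stdAddChar_coe, Nat.cast_pow, mul_div_assoc]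

lemma sum_sum_exp_mul_inverse_eq_zero {q : ℕ} [Fact q.Prime] {M : ℤ} (hM : IsCoprime M (q : ℤ))
    (k : ℤ) (z : ℕ) (w : ℕ → ℕ → ℤ)
    (hw : ∀ x < q, ∀ y < q, Int.gcd ((x : ℤ) * z - (y : ℤ) ^ 2 * q) q = 1 →
      ((x : ℤ) * z - (y : ℤ) ^ 2 * q) * w x y ≡ 1 [ZMOD (q : ℤ) ^ 2]) :
    ∑ x ∈ range q, ∑ y ∈ range q,
      (if ¬(q ∣ x ∧ q ∣ y) ∧ Int.gcd ((x : ℤ) * z - (y : ℤ) ^ 2 * q) q = 1 then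
        Complex.exp (2 * Real.pi * Complex.I * (((M * x * w x y + k : ℤ) : ℂ) / (q : ℂ) ^ 2))
      else 0) = 0 := by
  simp only [gcd_sub_mul_self_eq_one_iff, Int.cast_natCast, ← natCast_eq_zero_iff] at hw ⊢
  by_cases hz : (z : ZMod q) = 0
  · simp [hz]
  let C : ℂ := stdAddChar ((M : ZMod (q ^ 2)) * (z : ZMod (q ^ 2))⁻¹ + (k : ZMod (q ^ 2)))
  let c : ZMod q := M * (z : ZMod q)⁻¹ ^ 2
  have hc : c ≠ 0 :=
    mul_ne_zero ((coe_int_isUnit_iff_isCoprime M q).mpr hM.symm).ne_zero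
      (pow_ne_zero 2 (inv_ne_zero hz))
  calc
    _ = ∑ x ∈ range q, ∑ y ∈ range q, C *
          if (x : ZMod q) ≠ 0 then stdAddChar (c * (y : ZMod q) ^ 2 * (x : ZMod q)⁻¹) else 0 := by
      refine sum_congr rfl fun x hxq ↦ sum_congr rfl fun y hyq ↦ ?_
      by_cases hx : (x : ZMod q) = 0
      · simp [hx]
      have hfactor := stdAddChar_mul_of_sub_mul_mul_modEq_one M (by simpa using hx)
        (by simpa using hz) (hw x (mem_range.mp hxq) y (mem_range.mp hyq) ⟨hx, hz⟩)
      rw [if_pos ⟨fun h ↦ hx h.1, hx, hz⟩, if_pos hx, exp_div_sq_eq_stdAddChar, Int.cast_add,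
        AddChar.map_add_eq_mul, hfactor]
      simp only [C, c, AddChar.map_add_eq_mul]
      push_cast
      ring
    _ = C * ∑ y : ZMod q, ∑ x : ZMod q with x ≠ 0, stdAddChar (c * y ^ 2 * x⁻¹) := by
      rw [sum_comm]
      simp only [← mul_sum, sum_filter, ← sum_range_natCast_zmod q]
    _ = 0 := by
      rw [sum_sum_ne_zero_addChar_eq_zero (isPrimitive_stdAddChar q) hc two_ne_zero,
        mul_zero]

theorem sp4_kloosterman_w0_qq3_eval_general
    (q : ℕ) (hq : q.Prime) (M2 N2 : ℤ)
    (hM2 : IsCoprime M2 (q : ℤ))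
    (W : ℕ → ℕ → ℕ → ℤ)
    (hW : ∀ v3 v4 v14 : ℕ, v3 < q → v4 < q → v14 < q ^ 2 →
      Int.gcd ((v3 : ℤ) * v14 - (v4 : ℤ) ^ 2 * q) q = 1 →
      ((v3 : ℤ) * v14 - (v4 : ℤ) ^ 2 * q) * W v3 v4 v14 ≡ 1 [ZMOD ((q : ℤ) ^ 2)]) :
    ∑ v3 ∈ Finset.range q, ∑ v4 ∈ Finset.range q, ∑ v14 ∈ Finset.range (q ^ 2),
      (if ¬(q ∣ v3 ∧ q ∣ v4) ∧ Int.gcd ((v3 : ℤ) * v14 - (v4 : ℤ) ^ 2 * q) q = 1 then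
        Complex.exp (2 * Real.pi * Complex.I *
          (((M2 * v3 * W v3 v4 v14 + N2 * v14 : ℤ) : ℂ) / (q : ℂ) ^ 2))
      else 0)
      = 0 := by
  have : Fact q.Prime := ⟨hq⟩
  rw [sum_congr rfl fun v3 _ ↦ sum_comm, sum_comm]
  refine sum_eq_zero fun v14 hv14 ↦ ?_
  exact sum_sum_exp_mul_inverse_eq_zero hM2 (N2 * v14) v14 (fun v3 v4 ↦ W v3 v4 v14)
    fun v3 hv3 v4 hv4 ↦ hW v3 v4 v14 hv3 hv4 (mem_range.mp hv14)

/-- Evaluation of the `Sp(4)` Kloosterman sum `Kl_{q, w₀}((q,q³), M, N)`: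
for a prime `q` and integers `M2, N2` coprime to `q`, the exponential sum
`∑ exp(2πi·(M2·v3·w + N2·v14)/q²)` over integer triples `(v3, v4, v14)` with
`0 ≤ v3, v4 < q`, `0 ≤ v14 < q²`, with `q` not dividing both `v3` and `v4`,
and `v34 := v3·v14 − v4²·q` coprime to `q`, vanishes; here `W v3 v4 v14` is any
integer inverse of `v34` modulo `q²`. -/
theorem sp4_kloosterman_w0_qq3_eval
    (q : ℕ) (hq : q.Prime) (M2 N2 : ℤ)
    (hM2 : IsCoprime M2 (q : ℤ)) (hN2 : IsCoprime N2 (q : ℤ))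
    (W : ℕ → ℕ → ℕ → ℤ)
    (hW : ∀ v3 v4 v14 : ℕ, v3 < q → v4 < q → v14 < q ^ 2 →
      Int.gcd ((v3 : ℤ) * v14 - (v4 : ℤ) ^ 2 * q) q = 1 →
      ((v3 : ℤ) * v14 - (v4 : ℤ) ^ 2 * q) * W v3 v4 v14 ≡ 1 [ZMOD ((q : ℤ) ^ 2)]) :
    ∑ v3 ∈ Finset.range q, ∑ v4 ∈ Finset.range q, ∑ v14 ∈ Finset.range (q ^ 2),
      (if ¬(q ∣ v3 ∧ q ∣ v4) ∧ Int.gcd ((v3 : ℤ) * v14 - (v4 : ℤ) ^ 2 * q) q = 1 then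
        Complex.exp (2 * Real.pi * Complex.I *
          (((M2 * v3 * W v3 v4 v14 + N2 * v14 : ℤ) : ℂ) / (q : ℂ) ^ 2))
      else 0)
      = 0 := by
  exact sp4_kloosterman_w0_qq3_eval_general q hq M2 N2 hM2 W hW
end
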